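/- arXiv:2406.02309 — 3 statements merged into one kernel-verified Lean document; each statement's English description precedes it below -/
import Mathlib

section
/- Let ψ_d be the probability density of Beta(d,d) rescaled and centered, i.e., the density of √(2d)·(2X-1) for X ~ Beta(d,d), and let φ be the standard normal density. Then for every x with |x| < √(2d), the CDF Ψ_d evaluated at 1/2 + x/(2√(2d)) converges to Φ(x) as d → ∞, with error bounded by O(1/√d), where Φ is the standard normal CDF. -/
open MeasureTheory ProbabilityTheory

/-- The symmetric Beta(d,d) measure on ℝ, supported on (0,1). -/
noncomputable def betaMeasure (a : ℝ) : Measure ℝ :=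
  volume.withDensity fun x => ENNReal.ofReal
    (Set.indicator (Set.Ioo (0 : ℝ) 1)
      (fun x => (Real.Gamma (2 * a) / (Real.Gamma a) ^ 2) * x ^ (a - 1) * (1 - x) ^ (a - 1)) x)

/-- The unnormalised rescaled beta density. -/
noncomputable def gB (d : ℕ) (u : ℝ) : ℝ :=
  Set.indicator {u : ℝ | u ^ 2 < 2 * d} (fun u => (1 - u ^ 2 / (2 * d)) ^ (d - 1)) u

lemma gB_measurable (d : ℕ) : Measurable (gB d) := by
  unfold gB
  refine Measurable.indicator (by fun_prop) ?_
  exact measurableSet_lt (by fun_prop) (by fun_prop)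

lemma gB_nonneg (d : ℕ) (hd : 1 ≤ d) (u : ℝ) : 0 ≤ gB d u := by
  unfold gB
  refine Set.indicator_nonneg (fun u hu => ?_) u
  have hd' : (0 : ℝ) < d := by exact_mod_cast hd
  have : u ^ 2 / (2 * d) ≤ 1 := by
    rw [div_le_one (by positivity)]; exact le_of_lt hu
  exact pow_nonneg (by linarith) _

lemma aux_pt (d : ℕ) (hd : 1 ≤ d) (t : ℝ) (ht : 0 ≤ t) (htd : t ≤ d) :
    |(1 - t / d) ^ (d - 1) - Real.exp (-t)| ≤ (t ^ 2 + 3 * t) * Real.exp (-t) / d := by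
  have hd' : (0 : ℝ) < d := by exact_mod_cast hd
  obtain ⟨s, hs⟩ : ∃ s, s = t / d := ⟨_, rfl⟩
  have hts : t = d * s := by rw [hs]; field_simp
  have hs0 : 0 ≤ s := by rw [hs]; positivity
  have hs1 : s ≤ 1 := by rw [hs, div_le_one hd']; exact htd
  have hE : 0 < Real.exp (-t) := Real.exp_pos _
  have hR : (t ^ 2 + 3 * t) * Real.exp (-t) / d = (d * s ^ 2 + 3 * s) * Real.exp (-t) := by
    rw [hts]; field_simp
  rw [hR, ← hs, abs_le]
  constructor
  · have h1 : (1 - s ^ 2) * Real.exp (-s) ≤ 1 - s := by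
      have h2 : (1 + s) * Real.exp (-s) ≤ 1 := by
        have := Real.add_one_le_exp s
        calc (1 + s) * Real.exp (-s) ≤ Real.exp s * Real.exp (-s) := by gcongr; linarith
          _ = 1 := by rw [← Real.exp_add]; simp
      nlinarith
    have h3 : (1 - d * s ^ 2) ≤ (1 - s ^ 2) ^ d := by
      have := one_add_mul_le_pow (a := -s ^ 2) (by nlinarith) d
      calc _ = 1 + d * (-s ^ 2) := by ring
        _ ≤ _ := this
        _ = _ := by ring
    have h4 : ((1 - s ^ 2) * Real.exp (-s)) ^ d ≤ (1 - s) ^ d := by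
      apply pow_le_pow_left₀ _ h1
      exact mul_nonneg (by nlinarith) (Real.exp_pos _).le
    have h5 : (1 - s) ^ d ≤ (1 - s) ^ (d - 1) :=
      pow_le_pow_of_le_one (by linarith) (by linarith) (by omega)
    rw [mul_pow, ← Real.exp_nat_mul] at h4
    have h6 : (d : ℝ) * -s = -t := by rw [hts]; ring
    rw [h6] at h4
    have h7 := mul_le_mul_of_nonneg_right h3 hE.le
    have h8 := mul_nonneg hs0 hE.le
    nlinarith
  · have h1 : (1 - s) ^ (d - 1) ≤ Real.exp (-s) ^ (d - 1) := by
      apply pow_le_pow_left₀ (by linarith)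
      have := Real.add_one_le_exp (-s); linarith
    have h2 : Real.exp (-s) ^ (d - 1) = Real.exp (-t) * Real.exp s := by
      rw [← Real.exp_nat_mul, ← Real.exp_add]
      congr 1
      rw [hts]; push_cast [hd]; ring
    have h3 : Real.exp s ≤ 1 + 3 * s := by
      have h4 : 1 - s ≤ Real.exp (-s) := by have := Real.add_one_le_exp (-s); linarith
      have h5 : Real.exp s * Real.exp (-s) = 1 := by rw [← Real.exp_add]; simp
      have h6 : Real.exp s ≤ 3 := by
        have := Real.exp_le_exp.mpr hs1
        have := Real.exp_one_lt_d9
        linarith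
      have := Real.exp_pos s
      nlinarith
    have h7 := mul_le_mul_of_nonneg_left h3 hE.le
    have h8 : 0 ≤ d * s ^ 2 * Real.exp (-t) := by positivity
    nlinarith

lemma gB_sub_le (d : ℕ) (hd : 1 ≤ d) (u : ℝ) :
    |gB d u - Real.exp (-(1 / 2) * u ^ 2)| ≤ (8 / d) * Real.exp (-(1 / 4) * u ^ 2) := by
  have hd' : (1 : ℝ) ≤ d := by exact_mod_cast hd
  obtain ⟨t, ht⟩ : ∃ t, t = u ^ 2 / 2 := ⟨_, rfl⟩
  have ht0 : 0 ≤ t := by rw [ht]; positivity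
  have e1 : -(1 / 2) * u ^ 2 = -t := by rw [ht]; ring
  have e2 : -(1 / 4) * u ^ 2 = -t + t / 2 := by rw [ht]; ring
  have hE : 0 < Real.exp (-t) := Real.exp_pos _
  have key : |gB d u - Real.exp (-t)| ≤ (t ^ 2 + 3 * t) * Real.exp (-t) / d := by
    by_cases h : u ^ 2 < 2 * d
    · have : gB d u = (1 - t / d) ^ (d - 1) := by
        unfold gB
        rw [Set.indicator_of_mem (by exact h), ht, div_div]
      rw [this]
      exact aux_pt d hd t ht0 (by linarith)
    · have : gB d u = 0 := by
        unfold gB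
        rw [Set.indicator_of_notMem (by exact h)]
      rw [this, zero_sub, abs_neg, abs_of_pos hE, le_div_iff₀ (by linarith)]
      have h1 : (d : ℝ) ≤ t := by linarith
      rw [mul_comm]
      apply mul_le_mul_of_nonneg_right _ hE.le
      nlinarith
  rw [e1, e2, Real.exp_add]
  refine key.trans ?_
  have h2 := Real.quadratic_le_exp_of_nonneg (x := t / 2) (by positivity)
  have h3 : t ^ 2 + 3 * t ≤ 8 * Real.exp (t / 2) := by nlinarith
  rw [div_mul_eq_mul_div]
  apply div_le_div_of_nonneg_right _ (by linarith)
  have := mul_le_mul_of_nonneg_right h3 hE.le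
  linarith

lemma my_beta_eq (d : ℕ) (hd : 1 ≤ d) :
    _root_.betaMeasure (d : ℝ) = ProbabilityTheory.betaMeasure (d : ℝ) d := by
  unfold _root_.betaMeasure ProbabilityTheory.betaMeasure
  congr 1
  funext x
  rw [betaPDF_eq, Set.indicator_apply]
  congr 1
  simp only [Set.mem_Ioo, beta]
  congr 3
  rw [one_div_div, ← two_mul, sq]

instance (d : ℕ) [NeZero d] : IsProbabilityMeasure (_root_.betaMeasure (d : ℝ)) := by
  have hd : 1 ≤ d := NeZero.one_le
  have hd' : (0 : ℝ) < d := by exact_mod_cast hd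
  rw [my_beta_eq d hd]
  exact isProbabilityMeasureBeta hd' hd'

lemma my_beta_real (d : ℕ) (hd : 1 ≤ d) : ∃ c : ℝ, ∀ S : Set ℝ, MeasurableSet S →
    (_root_.betaMeasure (d : ℝ)).real S =
      c * ∫ u in {u : ℝ | 1 / 2 + u / (2 * Real.sqrt (2 * d)) ∈ S}, gB d u := by
  have hd' : (0 : ℝ) < d := by exact_mod_cast hd
  have hsq : Real.sqrt (2 * d) ^ 2 = 2 * d := Real.sq_sqrt (by positivity)
  have hr : 0 < Real.sqrt (2 * d) := Real.sqrt_pos.mpr (by positivity)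
  set r := Real.sqrt (2 * d) with hrdef
  set B : ℝ := Real.Gamma (2 * d) / (Real.Gamma d) ^ 2 with hB
  have hB0 : 0 ≤ B := by
    have := Real.Gamma_pos_of_pos (s := 2 * (d : ℝ)) (by positivity)
    positivity
  set p : ℝ → ℝ := Set.indicator (Set.Ioo (0 : ℝ) 1)
      (fun x => B * x ^ ((d : ℝ) - 1) * (1 - x) ^ ((d : ℝ) - 1)) with hp
  have hpm : Measurable p := by
    rw [hp]
    exact Measurable.indicator (by fun_prop) measurableSet_Ioo
  have hp0 : ∀ x, 0 ≤ p x := by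
    intro x
    refine Set.indicator_nonneg (fun x hx => ?_) x
    have h1 := Real.rpow_nonneg hx.1.le ((d : ℝ) - 1)
    have h2 := Real.rpow_nonneg (sub_nonneg.mpr hx.2.le) ((d : ℝ) - 1)
    positivity
  have hcomp : ∀ u, p (1 / 2 + u / (2 * r)) = B / 4 ^ (d - 1) * gB d u := by
    intro u
    have hprod : (1 / 2 + u / (2 * r)) * (1 - (1 / 2 + u / (2 * r))) =
        (1 - u ^ 2 / (2 * d)) / 4 := by
      rw [← hsq]; field_simp; ring
    have hcast : ((d : ℝ) - 1) = ((d - 1 : ℕ) : ℝ) := by push_cast [hd]; ring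
    by_cases h : u ^ 2 < 2 * d
    · have habs : |u| < r := by
        refine abs_lt_of_sq_lt_sq ?_ hr.le
        rw [hsq]; exact h
      have h1 := abs_lt.mp habs
      have hmem : 1 / 2 + u / (2 * r) ∈ Set.Ioo (0 : ℝ) 1 := by
        have e : u / (2 * r) = (u / r) / 2 := by field_simp
        have a1 : u / r < 1 := by rw [div_lt_one hr]; exact h1.2
        have a2 : -1 < u / r := by rw [lt_div_iff₀ hr]; linarith
        rw [e]
        constructor <;> linarith
      rw [hp, Set.indicator_of_mem hmem]
      unfold gB
      rw [Set.indicator_of_mem (by exact h)]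
      simp only [hcast, Real.rpow_natCast]
      rw [mul_assoc, ← mul_pow, hprod, div_pow]
      ring
    · have hnm : 1 / 2 + u / (2 * r) ∉ Set.Ioo (0 : ℝ) 1 := by
        intro hm
        have h2 := mul_pos hm.1 (sub_pos.mpr hm.2)
        rw [hprod] at h2
        have h3 : u ^ 2 / (2 * d) < 1 := by linarith
        rw [div_lt_one (by positivity)] at h3
        exact h h3
      rw [hp, Set.indicator_of_notMem hnm]
      unfold gB
      rw [Set.indicator_of_notMem (by exact h)]
      simp
  refine ⟨B / 4 ^ (d - 1) / (2 * r), fun S hS => ?_⟩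
  have h1 : (_root_.betaMeasure (d : ℝ)).real S = ∫ x in S, p x := by
    rw [integral_eq_lintegral_of_nonneg_ae (Filter.Eventually.of_forall hp0)
      hpm.aestronglyMeasurable, Measure.real]
    unfold _root_.betaMeasure
    rw [withDensity_apply _ hS]
  have hS' : MeasurableSet {u : ℝ | 1 / 2 + u / (2 * r) ∈ S} := by
    have hm : Measurable (fun u : ℝ => 1 / 2 + u / (2 * r)) := by fun_prop
    exact hm hS
  rw [h1, ← integral_indicator hS, ← integral_indicator hS']
  have h2 : ∫ u, (S.indicator p) (1 / 2 + u / (2 * r)) = |2 * r| * ∫ x, S.indicator p x := by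
    rw [Measure.integral_comp_div (fun y => S.indicator p (1 / 2 + y)) (2 * r),
      integral_add_left_eq_self (S.indicator p) (1 / 2 : ℝ)]
    simp
  have h3 : ∀ u, (S.indicator p) (1 / 2 + u / (2 * r)) =
      B / 4 ^ (d - 1) * ({u : ℝ | 1 / 2 + u / (2 * r) ∈ S}.indicator (gB d) u) := by
    intro u
    by_cases h : 1 / 2 + u / (2 * r) ∈ S
    · rw [Set.indicator_of_mem h, Set.indicator_of_mem (by exact h), hcomp]
    · rw [Set.indicator_of_notMem h, Set.indicator_of_notMem (by exact h), mul_zero]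
  simp_rw [h3] at h2
  rw [integral_const_mul, abs_of_pos (by positivity)] at h2
  rw [div_mul_eq_mul_div, h2]
  field_simp

lemma gauss_cdf (x : ℝ) : cdf (gaussianReal 0 1) x =
    (∫ u in Set.Iic x, Real.exp (-(1 / 2) * u ^ 2)) / Real.sqrt (2 * Real.pi) := by
  rw [cdf_eq_real, Measure.real, gaussianReal_apply_eq_integral _ one_ne_zero,
    ENNReal.toReal_ofReal (by
      apply integral_nonneg; intro u; exact gaussianPDFReal_nonneg _ _ _)]
  rw [div_eq_inv_mul, ← integral_const_mul]
  congr 1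
  funext u
  simp only [gaussianPDFReal, NNReal.coe_one, mul_one, sub_zero]
  congr 2
  ring

/-- Convergence of the Beta(d,d) CDF to the standard normal CDF: for every `x` with
`|x| < √(2d)`, `Ψ_d(1/2 + x/(2√(2d)))` converges to `Φ(x)` as `d → ∞`, with an `O(1/√d)`
error bound. -/
theorem betaCDF_tendsto_gaussianCDF :
    ∃ C > (0 : ℝ), ∀ d : ℕ, 1 ≤ d → ∀ x : ℝ, |x| < Real.sqrt (2 * d) →
      |cdf (betaMeasure (d : ℝ)) (1 / 2 + x / (2 * Real.sqrt (2 * d))) -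
          cdf (gaussianReal 0 1) x| ≤ C / Real.sqrt d := by
  set f : ℝ → ℝ := fun u => Real.exp (-(1 / 2) * u ^ 2) with hf
  set h : ℝ → ℝ := fun u => Real.exp (-(1 / 4) * u ^ 2) with hh
  have hfi : Integrable f := integrable_exp_neg_mul_sq (by norm_num)
  have hhi : Integrable h := integrable_exp_neg_mul_sq (by norm_num)
  set Z := Real.sqrt (2 * Real.pi) with hZ
  have hZ0 : 0 < Z := Real.sqrt_pos.mpr (by positivity)
  have hfZ : ∫ u, f u = Z := by
    rw [hf, integral_gaussian, hZ]; congr 1; ring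
  set H := ∫ u, h u with hH
  have hH0 : 0 < H := by
    rw [hH, hh, integral_gaussian]; positivity
  refine ⟨16 * H / Z, by positivity, fun d hd x _ => ?_⟩
  have hd1 : (1 : ℝ) ≤ d := by exact_mod_cast hd
  haveI : NeZero d := ⟨by omega⟩
  have hgi : Integrable (gB d) := by
    have : Integrable (fun u => gB d u - f u) := by
      refine Integrable.mono' (hhi.const_mul (8 / d)) ?_ ?_
      · exact ((gB_measurable d).aestronglyMeasurable).sub hfi.aestronglyMeasurable
      · exact Filter.Eventually.of_forall (gB_sub_le d hd)
    have h2 := this.add hfi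
    refine h2.congr (Filter.Eventually.of_forall fun u => ?_)
    simp
  have hbound : ∀ S : Set ℝ, |(∫ u in S, gB d u) - ∫ u in S, f u| ≤ 8 / d * H := by
    intro S
    rw [← integral_sub hgi.integrableOn hfi.integrableOn]
    calc |∫ u in S, (gB d u - f u)| ≤ ∫ u in S, |gB d u - f u| := abs_integral_le_integral_abs
      _ ≤ ∫ u, |gB d u - f u| := setIntegral_le_integral (hgi.sub hfi).abs
          (Filter.Eventually.of_forall fun u => abs_nonneg _)
      _ ≤ ∫ u, 8 / d * h u := integral_mono (hgi.sub hfi).abs (hhi.const_mul _) (gB_sub_le d hd)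
      _ = 8 / d * H := by rw [integral_const_mul]
  obtain ⟨c, hc⟩ := my_beta_real d hd
  have hr : 0 < Real.sqrt (2 * d) := Real.sqrt_pos.mpr (by positivity)
  have hc1 := hc Set.univ MeasurableSet.univ
  simp only [Set.mem_univ, Set.setOf_true, probReal_univ] at hc1
  have hc2 := hc (Set.Iic (1 / 2 + x / (2 * Real.sqrt (2 * d)))) measurableSet_Iic
  have hset : {u : ℝ | 1 / 2 + u / (2 * Real.sqrt (2 * d)) ∈
      Set.Iic (1 / 2 + x / (2 * Real.sqrt (2 * d)))} = Set.Iic x := by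
    ext u
    simp only [Set.mem_setOf_eq, Set.mem_Iic, add_le_add_iff_left]
    exact div_le_div_iff_of_pos_right (by positivity)
  rw [hset] at hc2
  have hb1 := hbound Set.univ
  have hb2 := hbound (Set.Iic x)
  rw [cdf_eq_real, gauss_cdf, hc2]
  have hle1 : c * ∫ u in Set.Iic x, gB d u ≤ 1 := by rw [← hc2]; exact measureReal_le_one
  have hge0 : 0 ≤ c * ∫ u in Set.Iic x, gB d u := by rw [← hc2]; exact measureReal_nonneg
  rw [setIntegral_univ] at hb1 hc1
  rw [setIntegral_univ, hfZ] at hb1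
  change |c * (∫ u in Set.Iic x, gB d u) - (∫ u in Set.Iic x, f u) / Z| ≤ _
  set G := ∫ u in Set.Iic x, gB d u
  set F := ∫ u in Set.Iic x, f u
  set Y := ∫ u, gB d u
  have e : c * G - F / Z = ((G - F) + (c * G) * (Z - Y)) / Z := by
    have : c * G * (Z - Y) = c * G * Z - G := by
      calc _ = c * G * Z - G * (c * Y) := by ring
        _ = _ := by rw [← hc1]; ring
    rw [this]; field_simp; ring
  rw [e, abs_div, abs_of_pos hZ0]
  have h1 : |(G - F) + (c * G) * (Z - Y)| ≤ 16 * H / d := by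
    calc _ ≤ |G - F| + |(c * G) * (Z - Y)| := abs_add_le _ _
      _ = |G - F| + (c * G) * |Y - Z| := by rw [abs_mul, abs_of_nonneg hge0, abs_sub_comm Z Y]
      _ ≤ 8 / d * H + 1 * (8 / d * H) := by gcongr
      _ = 16 * H / d := by ring
  have hsd : Real.sqrt d ≤ d := by
    rw [Real.sqrt_le_left (by linarith)]; nlinarith
  have hsd0 : 0 < Real.sqrt d := Real.sqrt_pos.mpr (by linarith)
  calc _ ≤ (16 * H / d) / Z := by gcongr
    _ ≤ (16 * H / Real.sqrt d) / Z := by gcongr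
    _ = _ := by ring
end

section
/- Let d ∈ ℕ₊, k with d - 2k ∈ [1,30] ∩ ℕ, η ∈ {1, 1/2, 1/3, …, 1/50}, and set θ = 0.999, β = 0.99, τ = 0.6, μ = 0.02. Define m = (√(Γ((d-2k+2)/η)/Γ((d-2k)/η))·((1-2τ)μ + √(β + (4τ²-4τ)μ²)))^η. Then θ·Λ_{(d-2k)/η}(m) ≥ 1/2, where Λ_α is the CDF of Gamma(α,1). -/
/-- The regularized lower incomplete gamma function, the CDF of `Γ(α,1)`. -/
noncomputable def gammaCDF' (α t : ℝ) : ℝ :=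
  (1 / Real.Gamma α) * ∫ u in (0 : ℝ)..t, u ^ (α - 1) * Real.exp (-u)

/-- Upper tail of the Gamma distribution with integer shape `n`. -/
noncomputable def tailG (n : ℕ) (x : ℝ) : ℝ :=
  Real.exp (-x) * ∑ k ∈ Finset.range n, x ^ k / (k.factorial : ℝ)

lemma tailG_succ (n : ℕ) (x : ℝ) :
    tailG (n + 1) x = tailG n x + Real.exp (-x) * x ^ n / (n.factorial : ℝ) := by
  unfold tailG
  rw [Finset.sum_range_succ]; ring

lemma hasDerivAt_tailG (n : ℕ) (x : ℝ) :
    HasDerivAt (tailG (n + 1)) (-(x ^ n * Real.exp (-x)) / (n.factorial : ℝ)) x := by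
  have he : HasDerivAt (fun y : ℝ => Real.exp (-y)) (-Real.exp (-x)) x := by
    simpa using (hasDerivAt_neg x).exp
  induction n with
  | zero =>
    have : tailG (0 + 1) = fun y : ℝ => Real.exp (-y) := by
      funext y; simp [tailG]
    rw [this]; simpa using he
  | succ n ih =>
    have : tailG (n + 1 + 1) = fun y : ℝ => tailG (n + 1) y +
        Real.exp (-y) * y ^ (n + 1) / ((n + 1).factorial : ℝ) := by
      funext y; exact tailG_succ _ _
    rw [this]
    have h := ih.add ((he.mul (hasDerivAt_pow (n + 1) x)).div_const ((n + 1).factorial : ℝ))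
    refine h.congr_deriv ?_
    have h1 : (n.factorial : ℝ) ≠ 0 := by positivity
    rw [Nat.factorial_succ]
    push_cast
    have h2 : (n : ℝ) + 1 ≠ 0 := by positivity
    field_simp
    ring

lemma tailG_antitone (n : ℕ) : AntitoneOn (tailG (n + 1)) (Set.Ici 0) := by
  apply antitoneOn_of_deriv_nonpos (convex_Ici 0)
  · exact fun x _ => (hasDerivAt_tailG n x).continuousAt.continuousWithinAt
  · exact fun x _ => (hasDerivAt_tailG n x).differentiableAt.differentiableWithinAt
  · intro x hx
    rw [interior_Ici] at hx
    have hx : 0 < x := hx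
    rw [(hasDerivAt_tailG n x).deriv]
    have : 0 ≤ x ^ n * Real.exp (-x) / (n.factorial : ℝ) := by positivity
    rw [neg_div]; linarith

lemma pow_exp_le (n : ℕ) (x : ℝ) (hx : 0 ≤ x) (hn : 0 < n) :
    x ^ n * Real.exp (-x) ≤ (n : ℝ) ^ n * Real.exp (-(n : ℝ)) := by
  have hn' : (0 : ℝ) < n := by exact_mod_cast hn
  have h1 : x / n ≤ Real.exp (x / n - 1) := by
    have := Real.add_one_le_exp (x / n - 1); linarith
  have h2 : (x / n) ^ n ≤ Real.exp (x - n) := by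
    calc (x / n) ^ n ≤ (Real.exp (x / n - 1)) ^ n := by gcongr
      _ = Real.exp (x - n) := by
        rw [← Real.exp_nat_mul]; congr 1; field_simp
  rw [div_pow, div_le_iff₀ (by positivity)] at h2
  calc x ^ n * Real.exp (-x) ≤ (Real.exp (x - n) * (n : ℝ) ^ n) * Real.exp (-x) := by gcongr
    _ = (n : ℝ) ^ n * (Real.exp (x - n) * Real.exp (-x)) := by ring
    _ = _ := by rw [← Real.exp_add]; congr 2; ring

lemma tailG_diag_step (n : ℕ) (hn : 0 < n) :
    tailG n (n : ℝ) ≤ tailG (n + 1) ((n + 1 : ℕ) : ℝ) := by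
  obtain ⟨c, ⟨hc1, hc2⟩, hc⟩ := exists_hasDerivAt_eq_slope (tailG (n + 1)) _
    (show (n : ℝ) < (n : ℝ) + 1 by linarith)
    (fun x _ => (hasDerivAt_tailG n x).continuousAt.continuousWithinAt)
    (fun x _ => hasDerivAt_tailG n x)
  have hb := pow_exp_le n c ((Nat.cast_nonneg n).trans hc1.le) hn
  have hs := tailG_succ n (n : ℝ)
  have hf : (0 : ℝ) < n.factorial := by positivity
  have hb' : c ^ n * Real.exp (-c) / (n.factorial : ℝ)
      ≤ Real.exp (-(n : ℝ)) * (n : ℝ) ^ n / (n.factorial : ℝ) := by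
    rw [mul_comm (Real.exp _)]; gcongr
  rw [neg_div, add_sub_cancel_left, div_one] at hc
  push_cast
  linarith

lemma tailG_diag_mono (n m : ℕ) (hn : 0 < n) (h : n ≤ m) :
    tailG n (n : ℝ) ≤ tailG m (m : ℝ) := by
  induction m, h using Nat.le_induction with
  | base => exact le_rfl
  | succ m hm ih => exact ih.trans (tailG_diag_step m (by omega))

/-- `∏ (s + i)` for `1 ≤ i ≤ 2 ^ e`, by binary splitting. -/
def splitQ : ℕ → ℕ → ℕ
  | 0, s => s + 1
  | e + 1, s => splitQ e s * splitQ e (s + 2 ^ e)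

/-- Numerator of a block of `2 ^ e` terms of the exponential series at `2048`. -/
def splitT : ℕ → ℕ → ℕ
  | 0, s => s + 1
  | e + 1, s => splitT e s * splitQ e (s + 2 ^ e) + 2048 ^ (2 ^ e) * splitT e (s + 2 ^ e)

lemma splitQ_spec (e s : ℕ) : splitQ e s * s.factorial = (s + 2 ^ e).factorial := by
  induction e generalizing s with
  | zero => simp [splitQ, Nat.factorial_succ]
  | succ e ih =>
    have : s + 2 ^ (e + 1) = (s + 2 ^ e) + 2 ^ e := by ring
    rw [this, ← ih (s + 2 ^ e), ← ih s, splitQ]; ring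

lemma splitT_spec (e s : ℕ) : (splitT e s : ℝ) / ((s + 2 ^ e).factorial : ℝ) =
    ∑ i ∈ Finset.range (2 ^ e), (2048 : ℝ) ^ i / ((s + i).factorial : ℝ) := by
  induction e generalizing s with
  | zero =>
    have h1 : (s.factorial : ℝ) ≠ 0 := by positivity
    have h2 : (s : ℝ) + 1 ≠ 0 := by positivity
    simp [splitT, Nat.factorial_succ]
    field_simp
  | succ e ih =>
    have h2 : 2 ^ (e + 1) = 2 ^ e + 2 ^ e := by ring
    rw [h2, Finset.sum_range_add, ← ih s]
    have h3 : ∑ x ∈ Finset.range (2 ^ e), (2048 : ℝ) ^ (2 ^ e + x) /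
        ((s + (2 ^ e + x)).factorial : ℝ) = 2048 ^ (2 ^ e) *
        ((splitT e (s + 2 ^ e) : ℝ) / ((s + 2 ^ e + 2 ^ e).factorial : ℝ)) := by
      rw [ih, Finset.mul_sum]
      refine Finset.sum_congr rfl fun x _ => ?_
      rw [pow_add, add_assoc, mul_div_assoc]
    rw [h3, ← add_assoc, ← splitQ_spec e (s + 2 ^ e), splitT]
    have hq : splitQ e (s + 2 ^ e) ≠ 0 := by
      intro h0
      have := splitQ_spec e (s + 2 ^ e)
      rw [h0, zero_mul] at this
      exact (Nat.factorial_pos _).ne this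
    have hq' : (splitQ e (s + 2 ^ e) : ℝ) ≠ 0 := by exact_mod_cast hq
    have hf : ((s + 2 ^ e).factorial : ℝ) ≠ 0 := by positivity
    push_cast
    field_simp

lemma splitT_spec_zero (e N : ℕ) (h : 2 ^ e = N) : (splitT e 0 : ℝ) / (N.factorial : ℝ) =
    ∑ i ∈ Finset.range N, (2048 : ℝ) ^ i / (i.factorial : ℝ) := by
  subst h
  simpa only [zero_add] using splitT_spec e 0

lemma splitQ_spec' (e s N : ℕ) (h : s + 2 ^ e = N) :
    splitQ e s * s.factorial = N.factorial := by
  subst h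
  exact splitQ_spec e s

lemma split_check : 999 * (splitT 11 0 * splitQ 11 2048) ≤ 499 * splitT 12 0 := by
  decide +kernel

lemma ratio_bound (A B Q F G : ℕ) (E sA sB : ℝ) (hA : (A : ℝ) / F = sA)
    (hB : (B : ℝ) / G = sB) (hQ : Q * F = G) (hG : 0 < G) (hE : sB ≤ E) (hE0 : 0 < E)
    (hC : 999 * (A * Q) ≤ 499 * B) : E⁻¹ * sA ≤ 499 / 999 := by
  subst hA hB hQ
  have hf : (0 : ℝ) < F := by exact_mod_cast Nat.pos_of_mul_pos_left hG
  have hq : (0 : ℝ) < Q := by exact_mod_cast Nat.pos_of_mul_pos_right hG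
  have hC' : (999 : ℝ) * (A * Q) ≤ 499 * B := by exact_mod_cast hC
  push_cast at hE
  rw [div_le_iff₀ (by positivity)] at hE
  rw [inv_mul_le_iff₀ hE0, div_le_iff₀ hf]
  have h1 : (999 : ℝ) * A ≤ 499 * (E * F) := by
    refine le_of_mul_le_mul_right ?_ hq
    linarith
  linarith

lemma tailG_2048 : tailG 2048 2048 ≤ 499 / 999 := by
  unfold tailG
  rw [Real.exp_neg]
  exact ratio_bound _ _ _ _ _ _ _ _ (splitT_spec_zero 11 2048 (by norm_num))
    (splitT_spec_zero 12 4096 (by norm_num)) (splitQ_spec' 11 2048 4096 (by norm_num))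
    (Nat.factorial_pos _) (Real.sum_le_exp_of_nonneg (by norm_num) _) (Real.exp_pos _)
    split_check

lemma gammaCDF_eq (n : ℕ) (t : ℝ) :
    gammaCDF' ((n + 1 : ℕ) : ℝ) t = 1 - tailG (n + 1) t := by
  unfold gammaCDF'
  have hf : (n.factorial : ℝ) ≠ 0 := by positivity
  have h : ∫ u in (0 : ℝ)..t, u ^ (((n + 1 : ℕ) : ℝ) - 1) * Real.exp (-u)
      = ∫ u in (0 : ℝ)..t, u ^ n * Real.exp (-u) := by
    congr 1; funext u
    push_cast
    rw [add_sub_cancel_right, Real.rpow_natCast]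
  have h2 : ∫ u in (0 : ℝ)..t, u ^ n * Real.exp (-u)
      = (-(n.factorial : ℝ) * tailG (n + 1) t) - (-(n.factorial : ℝ) * tailG (n + 1) 0) := by
    refine intervalIntegral.integral_eq_sub_of_hasDerivAt
      (f := fun x => -(n.factorial : ℝ) * tailG (n + 1) x) (fun x _ => ?_) ?_
    · refine ((hasDerivAt_tailG n x).const_mul (-(n.factorial : ℝ))).congr_deriv ?_
      field_simp
    · exact (by fun_prop : Continuous fun u : ℝ => u ^ n * Real.exp (-u)).intervalIntegrable _ _
  have h0 : tailG (n + 1) 0 = 1 := by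
    simp [tailG, Finset.sum_range_succ']
  rw [h, h2, h0]
  push_cast
  rw [Real.Gamma_nat_eq_factorial]
  field_simp
  ring

/-- For `d - 2k ∈ [1,30] ∩ ℕ`, `η ∈ {1, 1/2, …, 1/50}`, and `θ = 0.999`, `β = 0.99`,
`τ = 0.6`, `μ = 0.02`, with
`m = (√(Γ((d-2k+2)/η)/Γ((d-2k)/η))·((1-2τ)μ + √(β + (4τ²-4τ)μ²)))^η`,
we have `θ·Λ_{(d-2k)/η}(m) ≥ 1/2`. -/
theorem dsrs_numeric_lower_bound (d k n : ℕ) (hn : 1 ≤ n) (hn50 : n ≤ 50)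
    (h1 : 2 * k + 1 ≤ d) (h30 : d ≤ 2 * k + 30) :
    (1 : ℝ) / 2 ≤
      (0.999 : ℝ) *
        gammaCDF' (((d : ℝ) - 2 * k) / ((1 : ℝ) / n))
          ((Real.sqrt
              (Real.Gamma (((d : ℝ) - 2 * k + 2) / ((1 : ℝ) / n)) /
                Real.Gamma (((d : ℝ) - 2 * k) / ((1 : ℝ) / n))) *
            ((1 - 2 * (0.6 : ℝ)) * (0.02 : ℝ) +
              Real.sqrt ((0.99 : ℝ) + (4 * (0.6 : ℝ) ^ 2 - 4 * 0.6) * (0.02 : ℝ) ^ 2))) ^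
            ((1 : ℝ) / n)) := by
  obtain ⟨j, rfl⟩ : ∃ j, d = 2 * k + j := ⟨d - 2 * k, by omega⟩
  have hj1 : 1 ≤ j := by omega
  have hj : j ≤ 30 := by omega
  obtain ⟨a, ha⟩ : ∃ a, j * n = a + 1 :=
    ⟨j * n - 1, (Nat.sub_add_cancel (Nat.mul_pos hj1 hn)).symm⟩
  have ha30 : a + 1 ≤ 30 * n := by rw [← ha]; gcongr
  have ha' : (j : ℝ) * n = ((a + 1 : ℕ) : ℝ) := by exact_mod_cast ha
  have hn0 : n ≠ 0 := by omega
  have e1 : (((2 * k + j : ℕ) : ℝ) - 2 * k) / ((1 : ℝ) / n) = ((a + 1 : ℕ) : ℝ) := by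
    rw [← ha', div_div_eq_mul_div, div_one]; push_cast; ring
  obtain ⟨l, hl⟩ : ∃ l, 2 * n = l + 1 := ⟨2 * n - 1, by omega⟩
  have hl' : (2 : ℝ) * n = l + 1 := by exact_mod_cast hl
  have e2 : (((2 * k + j : ℕ) : ℝ) - 2 * k + 2) / ((1 : ℝ) / n)
      = ((a + l + 1 : ℕ) : ℝ) + 1 := by
    rw [div_div_eq_mul_div, div_one]; push_cast at ha' ⊢; linarith
  rw [e1, e2, Real.Gamma_nat_eq_factorial]
  have e3 : Real.Gamma ((a + 1 : ℕ) : ℝ) = (a.factorial : ℝ) := by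
    push_cast; exact Real.Gamma_nat_eq_factorial a
  rw [e3]
  have hA0 : (0 : ℝ) < ((a + 1 : ℕ) : ℝ) := by positivity
  have hfac : (a.factorial : ℝ) * ((a + 1 : ℕ) : ℝ) ^ l ≤ ((a + l).factorial : ℝ) := by
    exact_mod_cast Nat.factorial_mul_pow_le_factorial
  have hlast : (31 / 30 : ℝ) * ((a + 1 : ℕ) : ℝ) ≤ ((a + l + 1 : ℕ) : ℝ) := by
    have h3 : ((a + 1 : ℕ) : ℝ) ≤ 30 * n := by exact_mod_cast ha30
    have h4 : (1 : ℝ) ≤ n := by exact_mod_cast hn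
    push_cast at h3 ⊢; linarith
  have hratio : (((a + 1 : ℕ) : ℝ) ^ n / 0.99) ^ 2 ≤
      ((a + l + 1).factorial : ℝ) / (a.factorial : ℝ) := by
    rw [le_div_iff₀ (by positivity), div_pow, ← pow_mul, mul_comm n 2, hl,
      Nat.factorial_succ (a + l), pow_succ, Nat.cast_mul]
    calc ((a + 1 : ℕ) : ℝ) ^ l * ((a + 1 : ℕ) : ℝ) / 0.99 ^ 2 * (a.factorial : ℝ)
        = (1 / 0.99 ^ 2 * ((a + 1 : ℕ) : ℝ)) *
          ((a.factorial : ℝ) * ((a + 1 : ℕ) : ℝ) ^ l) := by ring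
      _ ≤ (31 / 30 * ((a + 1 : ℕ) : ℝ)) *
          ((a.factorial : ℝ) * ((a + 1 : ℕ) : ℝ) ^ l) := by
        have hq : (1 / 0.99 ^ 2 : ℝ) ≤ 31 / 30 := by norm_num
        exact mul_le_mul_of_nonneg_right (mul_le_mul_of_nonneg_right hq hA0.le) (by positivity)
      _ ≤ _ := by gcongr
  have hs := Real.le_sqrt_of_sq_le hratio
  have hc : (0.994 : ℝ) ≤ Real.sqrt ((0.99 : ℝ) +
      (4 * (0.6 : ℝ) ^ 2 - 4 * 0.6) * (0.02 : ℝ) ^ 2) :=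
    Real.le_sqrt_of_sq_le (by norm_num)
  have hc' : (0.99 : ℝ) ≤ (1 - 2 * (0.6 : ℝ)) * (0.02 : ℝ) + Real.sqrt ((0.99 : ℝ) +
      (4 * (0.6 : ℝ) ^ 2 - 4 * 0.6) * (0.02 : ℝ) ^ 2) := by
    norm_num at hc ⊢; linarith
  have hprod := mul_le_mul hs hc' (by norm_num) (Real.sqrt_nonneg _)
  rw [div_mul_cancel₀ _ (by norm_num)] at hprod
  have hm := Real.rpow_le_rpow (by positivity) hprod
    (by positivity : (0 : ℝ) ≤ (1 : ℝ) / n)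
  have hroot : (((a + 1 : ℕ) : ℝ) ^ n) ^ ((1 : ℝ) / n) = ((a + 1 : ℕ) : ℝ) := by
    rw [one_div]; exact Real.pow_rpow_inv_natCast hA0.le hn0
  rw [hroot] at hm
  rw [gammaCDF_eq]
  have h1 := tailG_antitone a (Set.mem_Ici.2 hA0.le) (Set.mem_Ici.2 (hA0.le.trans hm)) hm
  have h2 := tailG_diag_mono (a + 1) 2048 (by omega) (by omega)
  have h3 := tailG_2048
  push_cast at h1 h2 h3 ⊢
  norm_num at h1 h2 h3 ⊢
  linarith
end

section
/- Let P = G(σ,η,k) be the EGG distribution on ℝ^d and f*(t) = 1{‖t‖₂ ≤ T}. Then for δ = (ρ,0,…,0), E_{z~P}[f*(δ+z)] = E_{u~Gamma((d-2k)/η,1)} Ψ_{(d-1)/2}((T² - (σ_g(2u)^{1/η} - ρ)²)/(4ρσ_g(2u)^{1/η})). -/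
open MeasureTheory ProbabilityTheory

/-- The density of the Exponential General Gaussian distribution `G(σ,η,k)` on `ℝ^d`. -/
noncomputable def eggPDF (d k : ℕ) (η σg : ℝ) (x : EuclideanSpace ℝ (Fin d)) : ℝ :=
  (η / 2) * (2 * σg ^ η) ^ (-(((d : ℝ) - 2 * k) / η)) * Real.pi ^ (-(d : ℝ) / 2) *
    (Real.Gamma ((d : ℝ) / 2) / Real.Gamma (((d : ℝ) - 2 * k) / η)) *
    ‖x‖ ^ (-(2 * (k : ℝ))) * Real.exp (-(1 / 2) * (‖x‖ / σg) ^ η)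

/-- The CDF of the symmetric Beta(a,a) distribution, extended by `0` below `0` and `1`
above `1`. -/
noncomputable def betaCDF (a t : ℝ) : ℝ :=
  (Real.Gamma (2 * a) / (Real.Gamma a) ^ 2) *
    ∫ s in (0 : ℝ)..(min 1 (max 0 t)), s ^ (a - 1) * (1 - s) ^ (a - 1)


lemma lint_norm (m : ℕ) (f : ℝ → ENNReal) (hf : Measurable f) :
    ∫⁻ y : EuclideanSpace ℝ (Fin (m+1)), f ‖y‖ =
      ((m + 1 : ℕ) * volume (Metric.ball (0 : EuclideanSpace ℝ (Fin (m+1))) 1)) *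
        ∫⁻ s in Set.Ioi (0:ℝ), ENNReal.ofReal (s ^ m) * f s := by
  let E := EuclideanSpace ℝ (Fin (m+1))
  have mp := (volume : Measure E).measurePreserving_homeomorphUnitSphereProd
  calc ∫⁻ y : E, f ‖y‖ = ∫⁻ y in ({0}ᶜ : Set E), f ‖y‖ := by
        rw [restrict_compl_singleton]
    _ = ∫⁻ y : ({0}ᶜ : Set E), f ‖(y : E)‖ ∂(volume.comap Subtype.val) := by
        rw [lintegral_subtype_comap (measurableSet_singleton _).compl (fun y : E => f ‖y‖)]
    _ = ∫⁻ p, f (p.2 : ℝ) ∂((volume : Measure E).toSphere.prod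
          (Measure.volumeIoiPow (Module.finrank ℝ E - 1))) := by
        rw [← mp.lintegral_comp (by fun_prop)]
        simp
    _ = (volume : Measure E).toSphere Set.univ *
          ∫⁻ s, f (s : ℝ) ∂(Measure.volumeIoiPow (Module.finrank ℝ E - 1)) := by
        rw [lintegral_prod _ (by fun_prop)]
        simp [mul_comm]
    _ = _ := by
        rw [Measure.toSphere_apply_univ, Measure.volumeIoiPow,
          lintegral_withDensity_eq_lintegral_mul _ (by fun_prop) (by fun_prop)]
        have hfin : Module.finrank ℝ E = m + 1 := by simp [E]
        rw [hfin, Nat.add_sub_cancel]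
        congr 1
        simp only [Pi.mul_apply]
        exact lintegral_subtype_comap measurableSet_Ioi (fun s : ℝ => ENNReal.ofReal (s ^ m) * f s)

lemma lint_split (m : ℕ) (F : ℝ × ℝ → ENNReal) (hF : Measurable F) :
    ∫⁻ z : EuclideanSpace ℝ (Fin (m+2)), F (z 0, ‖z‖) =
      ∫⁻ x : ℝ, ∫⁻ y : EuclideanSpace ℝ (Fin (m+1)), F (x, √(x^2 + ‖y‖^2)) := by
  have h1 := (EuclideanSpace.volume_preserving_symm_measurableEquiv_toLp (Fin (m+2))).symm
  have h2 := (volume_preserving_piFinSuccAbove (fun _ : Fin (m+2) => ℝ) 0).symm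
  have h3 := (EuclideanSpace.volume_preserving_symm_measurableEquiv_toLp (Fin (m+1)))
  have hm : Measurable (fun z : EuclideanSpace ℝ (Fin (m+2)) => F (z 0, ‖z‖)) := by fun_prop
  have hm1 := hm.comp h1.measurable
  have hm2 := hm1.comp h2.measurable
  rw [← h1.lintegral_comp hm]
  change ∫⁻ a, ((fun z : EuclideanSpace ℝ (Fin (m+2)) => F (z 0, ‖z‖)) ∘ _) a = _
  rw [← h2.lintegral_comp hm1]
  change ∫⁻ a, (((fun z : EuclideanSpace ℝ (Fin (m+2)) => F (z 0, ‖z‖)) ∘ _) ∘ _) a = _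
  rw [Measure.volume_eq_prod, lintegral_prod _ hm2.aemeasurable]
  congr 1; ext x
  rw [← h3.lintegral_comp_emb (MeasurableEquiv.measurableEmbedding _)]
  congr 1; ext y
  have e0 : (MeasurableEquiv.toLp 2 (Fin (m + 2) → ℝ)).symm.symm
      ((MeasurableEquiv.piFinSuccAbove (fun _ : Fin (m+2) => ℝ) 0).symm
        (x, (MeasurableEquiv.toLp 2 (Fin (m + 1) → ℝ)).symm y)) =
      WithLp.toLp 2 (Fin.cons x y.ofLp : Fin (m+2) → ℝ) := by
    ext i
    refine Fin.cases ?_ (fun j => ?_) i <;> rfl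
  simp only [Function.comp_apply]
  rw [e0]
  simp only [EuclideanSpace.norm_eq]
  rw [Real.sq_sqrt (by positivity), Fin.sum_univ_succ]
  simp

lemma lint_polar (m : ℕ) (F : ℝ × ℝ → ENNReal) (hF : Measurable F) :
    ∫⁻ x : ℝ, ∫⁻ s in Set.Ioi (0:ℝ), ENNReal.ofReal (s ^ m) * F (x, √(x^2 + s^2)) =
      ∫⁻ r in Set.Ioi (0:ℝ), ∫⁻ θ in Set.Ioo 0 Real.pi,
        ENNReal.ofReal r * (ENNReal.ofReal ((r * Real.sin θ) ^ m) * F (r * Real.cos θ, r)) := by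
  let g : ℝ × ℝ → ENNReal := fun p =>
    (Set.univ ×ˢ Set.Ioi (0:ℝ)).indicator (fun p => ENNReal.ofReal (p.2 ^ m) * F (p.1, √(p.1^2 + p.2^2))) p
  have hg : Measurable g := by
    refine Measurable.indicator (by fun_prop) (MeasurableSet.univ.prod measurableSet_Ioi)
  have e1 : ∫⁻ x : ℝ, ∫⁻ s in Set.Ioi (0:ℝ), ENNReal.ofReal (s ^ m) * F (x, √(x^2 + s^2)) =
      ∫⁻ p, g p := by
    rw [Measure.volume_eq_prod, lintegral_prod _ hg.aemeasurable]
    congr 1; ext x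
    rw [← lintegral_indicator measurableSet_Ioi]
    congr 1; ext s
    by_cases hs : 0 < s <;> simp [g, Set.indicator, hs]
  rw [e1, ← lintegral_comp_polarCoord_symm, polarCoord_target, Measure.volume_eq_prod,
    ← Measure.prod_restrict, lintegral_prod]
  · refine setLIntegral_congr_fun measurableSet_Ioi (fun r hr => ?_)
    have hr : 0 < r := hr
    simp only [polarCoord_symm_apply, smul_eq_mul]
    rw [← lintegral_indicator measurableSet_Ioo, ← lintegral_indicator measurableSet_Ioo]
    congr 1; ext θ
    by_cases h1 : θ ∈ Set.Ioo 0 Real.pi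
    · have : θ ∈ Set.Ioo (-Real.pi) Real.pi := ⟨by linarith [h1.1, Real.pi_pos], h1.2⟩
      rw [Set.indicator_of_mem this, Set.indicator_of_mem h1]
      have hs := Real.sin_pos_of_mem_Ioo h1
      have : √((r * Real.cos θ)^2 + (r * Real.sin θ)^2) = r := by
        rw [mul_pow, mul_pow, ← mul_add, Real.cos_sq_add_sin_sq, mul_one, Real.sqrt_sq hr.le]
      simp only [g]
      rw [Set.indicator_of_mem (by simp; positivity)]
      simp only [this]
    · rw [Set.indicator_of_notMem h1]
      by_cases h2 : θ ∈ Set.Ioo (-Real.pi) Real.pi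
      · rw [Set.indicator_of_mem h2]
        have h3 : θ ≤ 0 := by
          by_contra h; exact h1 ⟨not_le.1 h, h2.2⟩
        have := Real.sin_nonpos_of_nonpos_of_neg_pi_le h3 h2.1.le
        simp only [g]
        rw [Set.indicator_of_notMem, mul_zero]
        simp only [Set.mem_prod, Set.mem_univ, Set.mem_Ioi, true_and, not_lt]
        nlinarith
      · rw [Set.indicator_of_notMem h2]
  · simp only [polarCoord_symm_apply]
    fun_prop

lemma lint_cos (m : ℕ) (g : ℝ → ENNReal) :
    ∫⁻ θ in Set.Ioo 0 Real.pi, ENNReal.ofReal (Real.sin θ ^ m) * g ((1 + Real.cos θ)/2) =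
      ∫⁻ t in Set.Ioo (0:ℝ) 1,
        ENNReal.ofReal (2 ^ m * (t ^ (((m:ℝ)+1)/2 - 1) * (1-t) ^ (((m:ℝ)+1)/2 - 1))) * g t := by
  have himg : (fun θ => (1 + Real.cos θ)/2) '' Set.Ioo 0 Real.pi = Set.Ioo (0:ℝ) 1 := by
    ext t
    constructor
    · rintro ⟨θ, hθ, rfl⟩
      have hs := Real.sin_pos_of_mem_Ioo hθ
      have := Real.sin_sq_add_cos_sq θ
      constructor <;> dsimp only <;> nlinarith
    · rintro ⟨h0, h1⟩
      refine ⟨Real.arccos (2*t-1), ⟨Real.arccos_pos.2 (by linarith), Real.arccos_lt_pi.2 (by linarith)⟩, ?_⟩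
      dsimp only
      rw [Real.cos_arccos (by linarith) (by linarith)]; ring
  have hd : ∀ θ ∈ Set.Ioo 0 Real.pi, HasDerivWithinAt (fun θ => (1 + Real.cos θ)/2) (-Real.sin θ/2) (Set.Ioo 0 Real.pi) θ := by
    intro θ _
    exact (((Real.hasDerivAt_cos θ).const_add 1).div_const 2).hasDerivWithinAt
  have hinj : Set.InjOn (fun θ => (1 + Real.cos θ)/2) (Set.Ioo 0 Real.pi) := by
    intro a ha b hb hab
    apply Real.injOn_cos ⟨ha.1.le, ha.2.le⟩ ⟨hb.1.le, hb.2.le⟩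
    dsimp only at hab; linarith
  rw [← himg, lintegral_image_eq_lintegral_abs_deriv_mul measurableSet_Ioo hd hinj]
  refine setLIntegral_congr_fun measurableSet_Ioo (fun θ hθ => ?_)
  have hs := Real.sin_pos_of_mem_Ioo hθ
  have hsc := Real.sin_sq_add_cos_sq θ
  rw [← mul_assoc, ← ENNReal.ofReal_mul (abs_nonneg _)]
  congr 2
  rw [← Real.mul_rpow (by nlinarith) (by nlinarith)]
  have : (1 + Real.cos θ)/2 * (1 - (1 + Real.cos θ)/2) = (Real.sin θ / 2)^(2:ℝ) := by
    rw [Real.rpow_two]; nlinarith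
  rw [this, ← Real.rpow_mul (by positivity), abs_of_nonpos (by linarith)]
  have e : 2 * (((m:ℝ)+1)/2 - 1) = m - 1 := by ring
  rw [e, Real.rpow_sub_one (by positivity), Real.rpow_natCast, div_pow]
  field_simp

lemma beta_intervalIntegrable (a : ℝ) (ha : 0 < a) :
    IntervalIntegrable (fun s : ℝ => s ^ (a - 1) * (1 - s) ^ (a - 1)) volume 0 1 := by
  have h := Complex.betaIntegral_convergent (u := a) (v := a) (by simpa) (by simpa)
  rw [intervalIntegrable_iff_integrableOn_Ioc_of_le zero_le_one] at h ⊢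
  have h2 := h.re
  refine (integrableOn_congr_fun (fun s hs => ?_) measurableSet_Ioc).1 h2
  have e1 : ((s:ℂ) ^ ((a:ℂ) - 1)) = ((s ^ (a-1) : ℝ) : ℂ) := by
    rw [Complex.ofReal_cpow hs.1.le]; push_cast; rfl
  have e2 : ((1 - (s:ℂ)) ^ ((a:ℂ) - 1)) = (((1-s) ^ (a-1) : ℝ) : ℂ) := by
    rw [Complex.ofReal_cpow (by linarith [hs.2])]; push_cast; rfl
  simp only [e1, e2]
  rw [← Complex.ofReal_mul]; simp

lemma clip_mem (t : ℝ) : min 1 (max 0 t) ∈ Set.Icc (0:ℝ) 1 :=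
  ⟨le_min zero_le_one (le_max_left _ _), min_le_left _ _⟩

lemma betaInt_nonneg (a t : ℝ) :
    0 ≤ ∫ s in (0 : ℝ)..(min 1 (max 0 t)), s ^ (a - 1) * (1 - s) ^ (a - 1) := by
  apply intervalIntegral.integral_nonneg (clip_mem t).1
  intro s hs
  have := hs.2.trans (clip_mem t).2
  exact mul_nonneg (Real.rpow_nonneg hs.1 _) (Real.rpow_nonneg (by linarith) _)

lemma betaCDF_nonneg (a t : ℝ) (ha : 0 < a) : 0 ≤ betaCDF a t := by
  have := betaInt_nonneg a t
  have := Real.Gamma_pos_of_pos ha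
  have := Real.Gamma_pos_of_pos (show 0 < 2 * a by linarith)
  unfold betaCDF
  positivity

lemma betaCDF_mono (a : ℝ) (ha : 0 < a) : Monotone (betaCDF a) := by
  intro s t hst
  have := Real.Gamma_pos_of_pos ha
  have := Real.Gamma_pos_of_pos (show 0 < 2 * a by linarith)
  unfold betaCDF
  gcongr
  have hh := beta_intervalIntegrable a ha
  apply intervalIntegral.integral_mono_interval le_rfl (clip_mem s).1
    (min_le_min le_rfl (max_le_max le_rfl hst))
  · refine (ae_restrict_iff' measurableSet_Ioc).2 (Filter.Eventually.of_forall fun x hx => ?_)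
    have := hx.2.trans (clip_mem t).2
    exact mul_nonneg (Real.rpow_nonneg hx.1.le _) (Real.rpow_nonneg (by linarith) _)
  · apply hh.mono_set
    rw [Set.uIcc_of_le (clip_mem t).1, Set.uIcc_of_le zero_le_one]
    exact Set.Icc_subset_Icc le_rfl (clip_mem t).2

lemma betaCDF_le (a t : ℝ) (ha : 0 < a) : betaCDF a t ≤ betaCDF a 1 := by
  rcases le_total t 1 with h | h
  · exact betaCDF_mono a ha h
  · apply le_of_eq
    unfold betaCDF
    have e1 : min 1 (max 0 t) = 1 := by simp [h]
    have e2 : min (1:ℝ) (max 0 1) = 1 := by simp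
    rw [e1, e2]

lemma lint_beta (a τ : ℝ) (ha : 0 < a) :
    ∫⁻ t in Set.Ioo (0:ℝ) 1, ENNReal.ofReal (t ^ (a - 1) * (1-t) ^ (a - 1)) *
        (Set.Iic τ).indicator 1 t =
      ENNReal.ofReal (Real.Gamma a ^ 2 / Real.Gamma (2 * a) * betaCDF a τ) := by
  have h1 := Real.Gamma_pos_of_pos ha
  have h2 := Real.Gamma_pos_of_pos (show 0 < 2 * a by linarith)
  have e : Real.Gamma a ^ 2 / Real.Gamma (2 * a) * betaCDF a τ =
      ∫ s in (0 : ℝ)..(min 1 (max 0 τ)), s ^ (a - 1) * (1 - s) ^ (a - 1) := by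
    unfold betaCDF; field_simp
  have hh := beta_intervalIntegrable a ha
  rw [e, intervalIntegral.integral_of_le (clip_mem τ).1, ofReal_integral_eq_lintegral_ofReal]
  · rw [setLIntegral_congr Ioo_ae_eq_Ioc, ← lintegral_indicator measurableSet_Ioc,
      ← lintegral_indicator measurableSet_Ioc]
    congr 1; ext t
    by_cases h : t ∈ Set.Ioc (0:ℝ) 1 <;> by_cases h' : t ≤ τ
    · rw [Set.indicator_of_mem h, Set.indicator_of_mem (s := Set.Iic τ) h', Set.indicator_of_mem]
      · simp
      · exact ⟨h.1, le_min h.2 (le_max_of_le_right h')⟩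
    · rw [Set.indicator_of_mem h, Set.indicator_of_notMem (s := Set.Iic τ) h', Set.indicator_of_notMem]
      · simp
      · rintro ⟨h3, h4⟩
        rcases le_max_iff.1 (h4.trans (min_le_right _ _)) with h5 | h5
        · linarith
        · exact h' h5
    all_goals
      rw [Set.indicator_of_notMem h, Set.indicator_of_notMem]
      rintro ⟨h3, h4⟩
      exact h ⟨h3, h4.trans (min_le_left _ _)⟩
  · rw [intervalIntegrable_iff_integrableOn_Ioc_of_le zero_le_one] at hh
    exact hh.mono_set (Set.Ioc_subset_Ioc le_rfl (clip_mem τ).2)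
  · refine (ae_restrict_iff' measurableSet_Ioc).2 (Filter.Eventually.of_forall fun x hx => ?_)
    have := hx.2.trans (clip_mem τ).2
    exact mul_nonneg (Real.rpow_nonneg hx.1.le _) (Real.rpow_nonneg (by linarith) _)

lemma lint_gamma (α η σ : ℝ) (hα : 0 < α) (hη : 0 < η) (hσ : 0 < σ) (h : ℝ → ENNReal)
    (hh : Measurable h) :
    ∫⁻ r in Set.Ioi (0:ℝ), ENNReal.ofReal (η * (2 * σ ^ η) ^ (-α) / Real.Gamma α *
        r ^ (α * η - 1) * Real.exp (-(1/2) * (r / σ) ^ η)) * h r =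
      ∫⁻ u, h (σ * (2 * u) ^ ((1:ℝ) / η)) ∂(gammaMeasure α 1) := by
  set φ : ℝ → ℝ := fun u => σ * (2 * u) ^ ((1:ℝ) / η) with hφ
  have hinv : ∀ u, 0 < u → (φ u / σ) ^ η = 2 * u := by
    intro u hu
    simp only [hφ]
    rw [mul_div_cancel_left₀ _ hσ.ne', ← Real.rpow_mul (by positivity),
      one_div_mul_cancel hη.ne', Real.rpow_one]
  have hpos : ∀ u, 0 < u → 0 < φ u := fun u hu => by simp only [hφ]; positivity
  have himg : φ '' Set.Ioi 0 = Set.Ioi 0 := by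
    ext r
    constructor
    · rintro ⟨u, hu, rfl⟩; exact hpos u hu
    · intro hr
      have hr : 0 < r := hr
      refine ⟨(r/σ)^η / 2, by simp only [Set.mem_Ioi]; positivity, ?_⟩
      simp only [hφ]
      rw [mul_div_cancel₀ _ two_ne_zero, ← Real.rpow_mul (by positivity),
        mul_one_div_cancel hη.ne', Real.rpow_one, mul_div_cancel₀ _ hσ.ne']
  have hinj : Set.InjOn φ (Set.Ioi 0) := by
    intro u hu v hv huv
    have h1 := hinv u hu
    rw [huv, hinv v hv] at h1
    linarith
  have hd : ∀ u ∈ Set.Ioi (0:ℝ), HasDerivWithinAt φ (σ * (2 * (1/η) * (2*u) ^ (1/η - 1))) (Set.Ioi 0) u := by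
    intro u hu
    have hu : 0 < u := hu
    have h1 : HasDerivAt (fun u : ℝ => 2 * u) 2 u := by
      simpa using (hasDerivAt_id u).const_mul 2
    exact ((h1.rpow_const (p := 1/η) (Or.inl (by positivity))).const_mul σ).hasDerivWithinAt
  have hφm : Measurable φ := by simp only [hφ]; fun_prop
  have hhφ : Measurable (fun u => h (σ * (2 * u) ^ ((1:ℝ) / η))) := hh.comp hφm
  have hgm : Measurable (gammaPDF α 1) := (measurable_gammaPDFReal α 1).ennreal_ofReal
  rw [← himg, lintegral_image_eq_lintegral_abs_deriv_mul measurableSet_Ioi hd hinj, gammaMeasure,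
    lintegral_withDensity_eq_lintegral_mul _ hgm hhφ]
  have hz : ∫⁻ u, (gammaPDF α 1 * (fun u => h (φ u))) u =
      ∫⁻ u in Set.Ici 0, (gammaPDF α 1 * (fun u => h (φ u))) u := by
    rw [← lintegral_indicator measurableSet_Ici]
    congr 1; ext u
    by_cases hu : 0 ≤ u
    · rw [Set.indicator_of_mem (by exact hu)]
    · rw [Set.indicator_of_notMem (by exact hu)]
      simp [gammaPDF_of_neg (not_le.1 hu)]
  change _ = ∫⁻ u, (gammaPDF α 1 * (fun u => h (φ u))) u
  rw [hz, setLIntegral_congr Ioi_ae_eq_Ici.symm]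
  refine setLIntegral_congr_fun measurableSet_Ioi (fun u hu => ?_)
  have hu : 0 < u := hu
  have hG := Real.Gamma_pos_of_pos hα
  simp only [Pi.mul_apply]
  rw [← mul_assoc, ← ENNReal.ofReal_mul (abs_nonneg _), gammaPDF_of_nonneg hu.le]
  congr 2
  rw [hinv u hu, abs_of_pos (by positivity), Real.one_rpow]
  have e1 : φ u ^ (α * η - 1) = σ ^ (α * η) / σ * ((2*u) ^ α / (2*u) ^ (1/η)) := by
    simp only [hφ]
    rw [Real.mul_rpow (by positivity) (by positivity), Real.rpow_sub_one hσ.ne',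
      ← Real.rpow_mul (by positivity), ← Real.rpow_sub (by positivity)]
    congr 2; field_simp
  have e2 : (2 * σ ^ η) ^ (-α) = ((2:ℝ) ^ α)⁻¹ * (σ ^ (α * η))⁻¹ := by
    rw [Real.rpow_neg (by positivity), Real.mul_rpow (by positivity) (by positivity),
      ← Real.rpow_mul hσ.le, mul_inv, mul_comm η α]
  have e3 : (2*u) ^ α = 2 ^ α * u ^ α := Real.mul_rpow (by positivity) hu.le
  rw [e1, e2, e3, Real.rpow_sub_one (by positivity), Real.rpow_sub_one hu.ne']
  have e4 : -(1/2) * (2 * u) = -(1 * u) := by ring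
  rw [e4]
  have : (2*u) ^ (1/η) ≠ 0 := by positivity
  have : (2:ℝ) ^ α ≠ 0 := by positivity
  have : σ ^ (α * η) ≠ 0 := by positivity
  field_simp

lemma sphere_const (m : ℕ) :
    ((m + 1 : ℕ) : ENNReal) * volume (Metric.ball (0 : EuclideanSpace ℝ (Fin (m+1))) 1) =
      ENNReal.ofReal (2 * Real.pi ^ (((m:ℝ)+1)/2) / Real.Gamma (((m:ℝ)+1)/2)) := by
  have h0 : (0:ℝ) < ((m:ℝ)+1)/2 := by positivity
  have h1 := Real.Gamma_pos_of_pos h0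
  rw [EuclideanSpace.volume_ball, ← ENNReal.ofReal_natCast, ENNReal.ofReal_one, one_pow, one_mul,
    ← ENNReal.ofReal_mul (by positivity)]
  congr 1
  have e : (((Fintype.card (Fin (m+1)) : ℕ) : ℝ)) / 2 + 1 = ((m:ℝ)+1)/2 + 1 := by simp
  rw [e, Real.Gamma_add_one h0.ne']
  have e2 : √Real.pi ^ (Fintype.card (Fin (m+1))) = Real.pi ^ (((m:ℝ)+1)/2) := by
    rw [Real.sqrt_eq_rpow, ← Real.rpow_natCast, ← Real.rpow_mul Real.pi_pos.le]
    congr 1; simp; ring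
  rw [e2]
  push_cast
  field_simp

lemma const_eq (m : ℕ) :
    2 * Real.pi ^ (((m:ℝ)+1)/2) / Real.Gamma (((m:ℝ)+1)/2) *
      (2 ^ m * (Real.Gamma (((m:ℝ)+1)/2) ^ 2 / Real.Gamma (2 * (((m:ℝ)+1)/2)))) =
    2 * Real.pi ^ (((m:ℝ)+2)/2) / Real.Gamma (((m:ℝ)+2)/2) := by
  set a := ((m:ℝ)+1)/2 with ha
  have h0 : 0 < a := by rw [ha]; positivity
  have hd := Real.Gamma_mul_Gamma_add_half a
  have e1 : a + 1/2 = ((m:ℝ)+2)/2 := by rw [ha]; ring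
  have e2 : 1 - 2 * a = -(m:ℝ) := by rw [ha]; ring
  rw [e1, e2, Real.rpow_neg (by norm_num), Real.rpow_natCast] at hd
  have e3 : Real.pi ^ (((m:ℝ)+2)/2) = Real.pi ^ a * √Real.pi := by
    rw [Real.sqrt_eq_rpow, ← Real.rpow_add Real.pi_pos, ← e1]
  have g1 := Real.Gamma_pos_of_pos h0
  have g2 := Real.Gamma_pos_of_pos (show 0 < 2 * a by linarith)
  have g3 := Real.Gamma_pos_of_pos (show 0 < ((m:ℝ)+2)/2 by positivity)
  rw [e3]
  field_simp
  field_simp at hd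
  linear_combination hd

lemma lint_inner (m : ℕ) (p : ℝ) (ρ T r : ℝ) (hρ : 0 < ρ) (hr : 0 < r) :
    ∫⁻ θ in Set.Ioo 0 Real.pi, ENNReal.ofReal r * (ENNReal.ofReal ((r * Real.sin θ) ^ m) *
      (ENNReal.ofReal p * {q : ℝ × ℝ | ρ^2 + 2 * ρ * q.1 + q.2^2 ≤ T^2}.indicator 1
        (r * Real.cos θ, r))) =
    ENNReal.ofReal (r ^ (m+1)) * ENNReal.ofReal p *
      ENNReal.ofReal (2 ^ m * (Real.Gamma (((m:ℝ)+1)/2) ^ 2 / Real.Gamma (2 * (((m:ℝ)+1)/2)))) *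
      ENNReal.ofReal (betaCDF (((m:ℝ)+1)/2) ((T^2 - (r - ρ)^2) / (4 * ρ * r))) := by
  set τ := (T^2 - (r - ρ)^2) / (4 * ρ * r) with hτ
  have h0 : (0:ℝ) < ((m:ℝ)+1)/2 := by positivity
  have h1 := Real.Gamma_pos_of_pos h0
  have h2 := Real.Gamma_pos_of_pos (show (0:ℝ) < 2 * (((m:ℝ)+1)/2) by positivity)
  have step : ∀ θ, ENNReal.ofReal r * (ENNReal.ofReal ((r * Real.sin θ) ^ m) *
      (ENNReal.ofReal p * {q : ℝ × ℝ | ρ^2 + 2 * ρ * q.1 + q.2^2 ≤ T^2}.indicator 1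
        (r * Real.cos θ, r))) = (ENNReal.ofReal (r ^ (m+1)) * ENNReal.ofReal p) *
        (ENNReal.ofReal (Real.sin θ ^ m) *
          (Set.Iic τ).indicator (1 : ℝ → ENNReal) ((1 + Real.cos θ)/2)) := by
    intro θ
    have e1 : {q : ℝ × ℝ | ρ^2 + 2 * ρ * q.1 + q.2^2 ≤ T^2}.indicator (1 : ℝ × ℝ → ENNReal)
        (r * Real.cos θ, r) = (Set.Iic τ).indicator (1 : ℝ → ENNReal) ((1 + Real.cos θ)/2) := by
      simp only [Set.indicator, Set.mem_ofPred_eq, Set.mem_Iic, Pi.one_apply]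
      congr 1
      rw [hτ, le_div_iff₀ (by positivity), eq_iff_iff]
      constructor <;> intro h <;> nlinarith
    rw [e1, mul_pow, ENNReal.ofReal_mul (by positivity), pow_succ,
      ENNReal.ofReal_mul (by positivity)]
    ring
  simp_rw [step]
  rw [lintegral_const_mul' _ _ (ENNReal.mul_ne_top ENNReal.ofReal_ne_top ENNReal.ofReal_ne_top),
    lint_cos m ((Set.Iic τ).indicator 1)]
  have s2 : ∀ t : ℝ, ENNReal.ofReal (2 ^ m * (t ^ (((m:ℝ)+1)/2 - 1) * (1-t) ^ (((m:ℝ)+1)/2 - 1))) *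
      (Set.Iic τ).indicator (1 : ℝ → ENNReal) t = ENNReal.ofReal (2 ^ m) *
      (ENNReal.ofReal (t ^ (((m:ℝ)+1)/2 - 1) * (1-t) ^ (((m:ℝ)+1)/2 - 1)) *
      (Set.Iic τ).indicator (1 : ℝ → ENNReal) t) := by
    intro t
    rw [ENNReal.ofReal_mul (by positivity), mul_assoc]
  simp_rw [s2]
  rw [lintegral_const_mul' _ _ ENNReal.ofReal_ne_top, lint_beta _ _ h0, mul_assoc (_ * _),
    ENNReal.ofReal_mul (by positivity : (0:ℝ) ≤ 2 ^ m),
    ENNReal.ofReal_mul (by positivity : (0:ℝ) ≤ _ / _)]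
  ring

/-- For `P = G(σ,η,k)` the EGG distribution on `ℝ^d`, `f* = 1{‖t‖ ≤ T}`, and `δ = (ρ,0,…,0)`:
`E_{z~P}[f*(δ+z)] = E_{u~Γ((d-2k)/η,1)} Ψ_{(d-1)/2}((T² - (σ_g(2u)^{1/η}-ρ)²)/(4ρσ_g(2u)^{1/η}))`. -/
theorem egg_expectation_formula (d k : ℕ) (hd : 2 ≤ d) (hdk : 2 * k + 1 ≤ d)
    (η σg ρ T : ℝ) (hη : 0 < η) (hσg : 0 < σg) (hρ : 0 < ρ) (hT : 0 < T)
    (μP : Measure (EuclideanSpace ℝ (Fin d)))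
    (hμP : μP = volume.withDensity fun x => ENNReal.ofReal (eggPDF d k η σg x))
    (δ : EuclideanSpace ℝ (Fin d))
    (hδ : δ = ρ • EuclideanSpace.single (⟨0, by omega⟩ : Fin d) (1 : ℝ)) :
    μP {z : EuclideanSpace ℝ (Fin d) | ‖δ + z‖ ≤ T} =
      ENNReal.ofReal (∫ u,
        betaCDF (((d : ℝ) - 1) / 2)
          ((T ^ 2 - (σg * (2 * u) ^ ((1 : ℝ) / η) - ρ) ^ 2) /
            (4 * ρ * (σg * (2 * u) ^ ((1 : ℝ) / η))))
        ∂(gammaMeasure (((d : ℝ) - 2 * k) / η) 1)) := by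
  obtain ⟨m, rfl⟩ : ∃ m, d = m + 2 := ⟨d - 2, by omega⟩
  have hη' := hη.ne'
  have hkm : (2 * (k:ℝ)) + 1 ≤ (m:ℝ) + 2 := by exact_mod_cast hdk
  set α : ℝ := (((m + 2 : ℕ) : ℝ) - 2 * k) / η with hα
  have hαpos : 0 < α := by
    rw [hα]; push_cast
    exact div_pos (by linarith) hη
  have hαη : α * η = (m:ℝ) + 2 - 2 * k := by
    rw [hα]; push_cast; field_simp
  have hGα := Real.Gamma_pos_of_pos hαpos
  have hGd : 0 < Real.Gamma (((m:ℝ)+2)/2) := Real.Gamma_pos_of_pos (by positivity)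
  have ha : ((((m + 2 : ℕ) : ℝ)) - 1) / 2 = ((m:ℝ)+1)/2 := by push_cast; ring
  have ha0 : (0:ℝ) < ((m:ℝ)+1)/2 := by positivity
  rw [ha]
  set τ : ℝ → ℝ := fun r => (T^2 - (r - ρ)^2) / (4 * ρ * r) with hτ
  have hτm : Measurable τ := by simp only [hτ]; fun_prop
  have hbm : Measurable (fun r => betaCDF (((m:ℝ)+1)/2) (τ r)) :=
    (betaCDF_mono _ ha0).measurable.comp hτm
  have hφm : Measurable (fun u : ℝ => σg * (2 * u) ^ ((1 : ℝ) / η)) := by fun_prop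
  -- right-hand side
  have hprob : IsProbabilityMeasure (gammaMeasure α 1) :=
    isProbabilityMeasure_gammaMeasure hαpos one_pos
  have hR : ENNReal.ofReal (∫ u, betaCDF (((m:ℝ)+1)/2) (τ (σg * (2 * u) ^ ((1 : ℝ) / η)))
        ∂(gammaMeasure α 1)) =
      ∫⁻ u, ENNReal.ofReal (betaCDF (((m:ℝ)+1)/2) (τ (σg * (2 * u) ^ ((1 : ℝ) / η))))
        ∂(gammaMeasure α 1) := by
    apply ofReal_integral_eq_lintegral_ofReal
    · refine Integrable.of_bound (hbm.comp hφm).aestronglyMeasurable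
        (betaCDF (((m:ℝ)+1)/2) 1) (Filter.Eventually.of_forall fun u => ?_)
      rw [Real.norm_of_nonneg (betaCDF_nonneg _ _ ha0)]
      exact betaCDF_le _ _ ha0
    · exact Filter.Eventually.of_forall fun u => betaCDF_nonneg _ _ ha0
  change _ = ENNReal.ofReal (∫ u, betaCDF (((m:ℝ)+1)/2) (τ (σg * (2 * u) ^ ((1 : ℝ) / η)))
        ∂(gammaMeasure α 1))
  rw [hR, ← lint_gamma α η σg hαpos hη hσg
    (fun r => ENNReal.ofReal (betaCDF (((m:ℝ)+1)/2) (τ r))) hbm.ennreal_ofReal]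
  -- left-hand side
  let p : ℝ → ℝ := fun r => (η / 2) * (2 * σg ^ η) ^ (-α) * Real.pi ^ (-((m + 2 : ℕ) : ℝ) / 2) *
    (Real.Gamma (((m + 2 : ℕ) : ℝ) / 2) / Real.Gamma α) *
    r ^ (-(2 * (k : ℝ))) * Real.exp (-(1 / 2) * (r / σg) ^ η)
  have hpm : Measurable p := by simp only [p]; fun_prop
  have hS : MeasurableSet {q : ℝ × ℝ | ρ^2 + 2 * ρ * q.1 + q.2^2 ≤ T^2} :=
    measurableSet_le (by fun_prop) (by fun_prop)
  let F : ℝ × ℝ → ENNReal := fun q => ENNReal.ofReal (p q.2) *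
    {q : ℝ × ℝ | ρ^2 + 2 * ρ * q.1 + q.2^2 ≤ T^2}.indicator 1 q
  have hF : Measurable F := by
    refine Measurable.mul (by fun_prop) (measurable_one.indicator hS)
  have hset : MeasurableSet {z : EuclideanSpace ℝ (Fin (m+2)) | ‖δ + z‖ ≤ T} :=
    measurableSet_le (by fun_prop) (by fun_prop)
  have hL : μP {z : EuclideanSpace ℝ (Fin (m+2)) | ‖δ + z‖ ≤ T} =
      ∫⁻ z : EuclideanSpace ℝ (Fin (m+2)), F (z 0, ‖z‖) := by
    rw [hμP, withDensity_apply _ hset, ← lintegral_indicator hset]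
    congr 1; ext z
    have key : ‖δ + z‖ ≤ T ↔ ρ^2 + 2 * ρ * z 0 + ‖z‖^2 ≤ T^2 := by
      rw [← sq_le_sq₀ (norm_nonneg _) hT.le, norm_add_sq_real, hδ, norm_smul, inner_smul_left]
      have : (⟨0, by omega⟩ : Fin (m+2)) = 0 := rfl
      rw [this, EuclideanSpace.inner_single_left]
      simp [mul_assoc]
    simp only [F, Set.indicator, Set.mem_ofPred_eq, key, Pi.one_apply, mul_ite, mul_one, mul_zero]
    rfl
  rw [hL, lint_split m F hF]
  have hin : ∀ x : ℝ, ∫⁻ y : EuclideanSpace ℝ (Fin (m+1)), F (x, √(x^2 + ‖y‖^2)) =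
      ENNReal.ofReal (2 * Real.pi ^ (((m:ℝ)+1)/2) / Real.Gamma (((m:ℝ)+1)/2)) *
        ∫⁻ s in Set.Ioi (0:ℝ), ENNReal.ofReal (s ^ m) * F (x, √(x^2 + s^2)) := by
    intro x
    rw [lint_norm m (fun s => F (x, √(x^2 + s^2))) (by fun_prop), sphere_const]
  simp_rw [hin]
  rw [lintegral_const_mul' _ _ ENNReal.ofReal_ne_top, lint_polar m F hF,
    ← lintegral_const_mul' _ _ ENNReal.ofReal_ne_top]
  refine setLIntegral_congr_fun measurableSet_Ioi (fun r hr => ?_)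
  have hr : 0 < r := hr
  simp only [F]
  rw [lint_inner m (p r) ρ T r hρ hr, ← mul_assoc]
  congr 1
  have hGa := Real.Gamma_pos_of_pos ha0
  have hG2a := Real.Gamma_pos_of_pos (show (0:ℝ) < 2 * (((m:ℝ)+1)/2) by positivity)
  have hC := const_eq m
  have hpi := Real.pi_pos
  have hp0 : 0 ≤ p r := by
    have : 0 < Real.Gamma (((m + 2 : ℕ) : ℝ) / 2) := Real.Gamma_pos_of_pos (by positivity)
    simp only [p]; positivity
  rw [← ENNReal.ofReal_mul (by positivity), ← ENNReal.ofReal_mul (by positivity),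
    ← ENNReal.ofReal_mul (by positivity)]
  congr 1
  have e1 : ∀ A B C D : ℝ, A * (B * C * D) = (A * D) * (B * C) := by intros; ring
  rw [e1, hC]
  simp only [p]
  have e2 : r ^ (α * η - 1) = r ^ (m+1) * r ^ (-(2 * (k : ℝ))) := by
    rw [← Real.rpow_natCast, ← Real.rpow_add hr, hαη]
    congr 1; push_cast; ring
  have e3 : Real.pi ^ (-((m + 2 : ℕ) : ℝ) / 2) = (Real.pi ^ (((m:ℝ)+2)/2))⁻¹ := by
    rw [← Real.rpow_neg hpi.le]; congr 1; push_cast; ring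
  have e4 : (((m + 2 : ℕ) : ℝ)) / 2 = ((m:ℝ)+2)/2 := by push_cast; ring
  rw [e2, e3, e4]
  have : Real.pi ^ (((m:ℝ)+2)/2) ≠ 0 := by positivity
  generalize (2 * σg ^ η) ^ (-α) = X
  generalize r ^ (-(2 * (k : ℝ))) = Y
  field_simp
end
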